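/- arXiv:2502.11245 — 2 statements merged into one kernel-verified Lean document; each statement's English description precedes it below -/
import Mathlib

section
/- Let β : 𝒞 → Δ_𝒴 be such that for every c ∈ 𝒞 the function y ↦ β(c)_y has a unique maximizer y_c ∈ 𝒴. Define ω : Δ_𝒞 → Δ_𝒴 by ω(P)_y := Σ_{c∈𝒞} β(c)_y · P(c). Then ω(P) ∈ Δ_𝒴 for every P ∈ Δ_𝒞, and ω is extremal; in particular, for every λ ∈ (0,1) and all c ≠ c' in 𝒞 with y_c ≠ y_{c'}, one has max_y ω(λδ_c + (1−λ)δ_{c'})_y < max( max_y β(c)_y, max_y β(c')_y ). (Thus probabilistic-logic inference layers, which are linear in the concept distribution, satisfy the extremality assumption.) -/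
/-!
By linearity, `ω (δ_c) = β c` and `ω (λ δ_c + (1 - λ) δ_{c'}) = λ β c + (1 - λ) β c'`. At any label `y`
both `β c y` and `β c' y` are at most the larger `M` of the two maxima, and since `y` does not maximize
both, at least one of them is strictly below `M`. A proper convex combination of the two is then
strictly below `M` (`maxVal_mix_lt`). Distinct unique maximizers `yc c ≠ yc c'` exclude a common
maximizer, which gives the second strict inequality.
-/

/-- A distribution on a finite set `S` is a nonnegative function summing to one. -/
def FinDist (S : Type*) [Fintype S] : Type _ :=
  {p : S → ℝ // (∀ s, 0 ≤ p s) ∧ ∑ s, p s = 1}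

/-- The point-mass distribution `δ_s` at `s`. -/
def finDelta {S : Type*} [Fintype S] [DecidableEq S] (s : S) : FinDist S :=
  ⟨fun t => if t = s then 1 else 0,
   fun t => by dsimp only; split <;> norm_num,
   by simp⟩

/-- The convex combination `λ • p + (1 − λ) • q` of two distributions. -/
def finMix {S : Type*} [Fintype S] (lam : ℝ) (h0 : 0 ≤ lam) (h1 : lam ≤ 1)
    (p q : FinDist S) : FinDist S :=
  ⟨fun s => lam * p.1 s + (1 - lam) * q.1 s,
   fun s => add_nonneg (mul_nonneg h0 (p.2.1 s)) (mul_nonneg (by linarith) (q.2.1 s)),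
   by rw [Finset.sum_add_distrib, ← Finset.mul_sum, ← Finset.mul_sum, p.2.2, q.2.2]; ring⟩

/-- The maximum of a real-valued function on a finite nonempty type. -/
noncomputable def maxVal {S : Type*} [Fintype S] [Nonempty S] (p : S → ℝ) : ℝ :=
  Finset.univ.sup' Finset.univ_nonempty p

/-- An inference layer `ω : Δ_𝒞 → Δ_𝒴` is extremal if for every `λ ∈ (0,1)` and
all `c ≠ c'` such that no `y` simultaneously maximizes `ω(δ_c)` and `ω(δ_{c'})`,
the max label probability of the mixture is strictly below the max of the two
extreme ones. -/
def Extremal {C : Type*} [Fintype C] [DecidableEq C]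
    {Y : Type*} [Fintype Y] [Nonempty Y]
    (ω : FinDist C → FinDist Y) : Prop :=
  ∀ (lam : ℝ) (h0 : 0 < lam) (h1 : lam < 1) (c c' : C), c ≠ c' →
    (¬ ∃ y, (ω (finDelta c)).1 y = maxVal (ω (finDelta c)).1 ∧
            (ω (finDelta c')).1 y = maxVal (ω (finDelta c')).1) →
    maxVal (ω (finMix lam h0.le h1.le (finDelta c) (finDelta c'))).1 <
      max (maxVal (ω (finDelta c)).1) (maxVal (ω (finDelta c')).1)

/-- A distribution predicate on plain functions. -/
def IsDist {S : Type*} [Fintype S] (p : S → ℝ) : Prop :=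
  (∀ s, 0 ≤ p s) ∧ ∑ s, p s = 1

theorem le_maxVal {S : Type*} [Fintype S] [Nonempty S] (f : S → ℝ) (s : S) :
    f s ≤ maxVal f :=
  Finset.le_sup' f (Finset.mem_univ s)

/-- A proper convex combination of two functions without a common maximizer stays strictly below
the larger of their maxima. -/
theorem maxVal_mix_lt {S : Type*} [Fintype S] [Nonempty S] (f g : S → ℝ) (lam : ℝ)
    (h0 : 0 < lam) (h1 : lam < 1) (h : ¬ ∃ y, f y = maxVal f ∧ g y = maxVal g) :
    maxVal (fun y => lam * f y + (1 - lam) * g y) < max (maxVal f) (maxVal g) := by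
  refine (Finset.sup'_lt_iff _).2 fun y _ => ?_
  have hf := le_maxVal f y
  have hg := le_maxVal g y
  have hfM := le_max_left (maxVal f) (maxVal g)
  have hgM := le_max_right (maxVal f) (maxVal g)
  set M := max (maxVal f) (maxVal g)
  by_cases hfy : f y = maxVal f
  · have hlt : g y < maxVal g := lt_of_le_of_ne hg fun hgy => h ⟨y, hfy, hgy⟩
    nlinarith [mul_le_mul_of_nonneg_left (hf.trans hfM) h0.le,
      mul_lt_mul_of_pos_left (hlt.trans_le hgM) (sub_pos.2 h1)]
  · have hlt : f y < maxVal f := lt_of_le_of_ne hf hfy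
    nlinarith [mul_lt_mul_of_pos_left (hlt.trans_le hfM) h0,
      mul_le_mul_of_nonneg_left (hg.trans hgM) (sub_pos.2 h1).le]

/-- A strict maximizer is the only point at which the maximum is attained. -/
theorem eq_of_eq_maxVal {S : Type*} [Fintype S] [Nonempty S] {f : S → ℝ} {m y : S}
    (hm : ∀ z, z ≠ m → f z < f m) (hy : f y = maxVal f) : y = m := by
  by_contra hne
  exact absurd (le_maxVal f m) (not_le.2 (hy ▸ hm y hne))

/-- **Probabilistic-logic inference layers are extremal.**  Let `β : 𝒞 → Δ_𝒴`
be such that each `β c` has a unique maximizer `yc c`, and let `ω` be the linear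
layer `ω(P)_y = Σ_c β(c)_y · P(c)`.  Then `ω(P)` is a distribution for every
`P ∈ Δ_𝒞`, `ω` is extremal, and for `λ ∈ (0,1)` and `c ≠ c'` with
`yc c ≠ yc c'` we have
`max_y ω(λδ_c + (1−λ)δ_{c'})_y < max (max_y β(c)_y) (max_y β(c')_y)`. -/
theorem probabilistic_logic_extremal
    {C : Type*} [Fintype C] [DecidableEq C] [Nonempty C]
    {Y : Type*} [Fintype Y] [Nonempty Y]
    (β : C → FinDist Y) (yc : C → Y)
    (hyc : ∀ c y, y ≠ yc c → (β c).1 y < (β c).1 (yc c)) :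
    (∀ P : FinDist C, IsDist (fun y => ∑ c, (β c).1 y * P.1 c)) ∧
    ∀ ω : FinDist C → FinDist Y,
      (∀ (P : FinDist C) (y : Y), (ω P).1 y = ∑ c, (β c).1 y * P.1 c) →
      Extremal ω ∧
      ∀ (lam : ℝ) (h0 : 0 < lam) (h1 : lam < 1) (c c' : C), c ≠ c' →
        yc c ≠ yc c' →
        maxVal (ω (finMix lam h0.le h1.le (finDelta c) (finDelta c'))).1 <
          max (maxVal (β c).1) (maxVal (β c').1) := by
  refine ⟨fun P => ⟨fun y => Finset.sum_nonneg fun c _ => mul_nonneg ((β c).2.1 y) (P.2.1 c), ?_⟩,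
    fun ω hω => ?_⟩
  · rw [Finset.sum_comm]
    simp_rw [← Finset.sum_mul, (β _).2.2, one_mul]
    exact P.2.2
  · have hδ : ∀ c, (ω (finDelta c)).1 = (β c).1 := fun c => by
      funext y
      rw [hω]
      simp [finDelta]
    have hmix : ∀ (lam : ℝ) (h0 : 0 < lam) (h1 : lam < 1) (c c' : C),
        (ω (finMix lam h0.le h1.le (finDelta c) (finDelta c'))).1 =
          fun y => lam * (β c).1 y + (1 - lam) * (β c').1 y := fun lam h0 h1 c c' => by
      funext y
      rw [hω]
      simp [finMix, finDelta, mul_add, Finset.sum_add_distrib]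
      ring
    refine ⟨fun lam h0 h1 c c' _ h => ?_, fun lam h0 h1 c c' _ hne => ?_⟩
    · rw [hδ, hδ] at h ⊢
      rw [hmix lam h0 h1]
      exact maxVal_mix_lt _ _ lam h0 h1 h
    · rw [hmix lam h0 h1]
      refine maxVal_mix_lt _ _ lam h0 h1 ?_
      rintro ⟨y, hy, hy'⟩
      exact hne ((eq_of_eq_maxVal (hyc c) hy).symm.trans (eq_of_eq_maxVal (hyc c') hy'))
end

section
/- Let 𝒴 be a finite nonempty set, let u, v : 𝒴 → ℝ, and for λ ∈ ℝ define s(λ) := softmax( y ↦ λ·u(y) + (1−λ)·v(y) ). If y₁ ∈ 𝒴 maximizes y ↦ u(y) − v(y), then λ ↦ s(λ)_{y₁} is monotone nondecreasing on [0,1]; if y₂ ∈ 𝒴 minimizes y ↦ u(y) − v(y), then λ ↦ s(λ)_{y₂} is monotone nonincreasing on [0,1]. -/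
/-!
Dividing through by `exp (w y₀)` shows that `softmax w y₀` depends only on the relative logits
`w y - w y₀` and decreases in each of them (`softmax_le_softmax_of_sub_le`). Along the segment these
relative logits are affine in the parameter, with slope `(u - v) y - (u - v) y₀`, which is
nonpositive for all `y` when `y₀` maximizes `u - v` and nonnegative when it minimizes it.
-/

/-- The softmax distribution of a weight vector `w` on a finite nonempty set. -/
noncomputable def softmax {Y : Type*} [Fintype Y] (w : Y → ℝ) : Y → ℝ :=
  fun y => Real.exp (w y) / ∑ y', Real.exp (w y')

/-- Comparison principle: `softmax w y₀` is the reciprocal of `∑ y, exp (w y - w y₀)`, so lowering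
every logit relative to the one at `y₀` raises the probability of `y₀`. -/
theorem softmax_le_softmax_of_sub_le {Y : Type*} [Fintype Y] (w w' : Y → ℝ) (y₀ : Y)
    (h : ∀ y, w' y - w' y₀ ≤ w y - w y₀) : softmax w y₀ ≤ softmax w' y₀ := by
  have hpos : ∀ z : Y → ℝ, 0 < ∑ y, Real.exp (z y) := fun z =>
    Finset.sum_pos (fun y _ => Real.exp_pos _) ⟨y₀, Finset.mem_univ y₀⟩
  unfold softmax
  rw [div_le_div_iff₀ (hpos w) (hpos w'), Finset.mul_sum, Finset.mul_sum]
  refine Finset.sum_le_sum fun y _ => ?_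
  rw [← Real.exp_add, ← Real.exp_add, Real.exp_le_exp]
  linarith [h y]

/-- **Monotonicity of softmax along a segment of logits.**  With
`s(λ) := softmax (λ u + (1−λ) v)`: if `y₁` maximizes `u − v` then
`λ ↦ s(λ)_{y₁}` is nondecreasing on `[0,1]`; if `y₂` minimizes `u − v` then
`λ ↦ s(λ)_{y₂}` is nonincreasing on `[0,1]`. -/
theorem softmax_segment_monotone {Y : Type*} [Fintype Y] [Nonempty Y]
    (u v : Y → ℝ) :
    (∀ y₁ : Y, (∀ y, u y - v y ≤ u y₁ - v y₁) →
      MonotoneOn (fun lam : ℝ =>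
        softmax (fun y => lam * u y + (1 - lam) * v y) y₁) (Set.Icc 0 1)) ∧
    (∀ y₂ : Y, (∀ y, u y₂ - v y₂ ≤ u y - v y) →
      AntitoneOn (fun lam : ℝ =>
        softmax (fun y => lam * u y + (1 - lam) * v y) y₂) (Set.Icc 0 1)) := by
  refine ⟨fun y₁ h a _ b _ hab => ?_, fun y₂ h a _ b _ hab => ?_⟩
  -- In both cases the logit at parameter `lam` is `lam * (u - v) + v`, so the required
  -- inequality is a product of `b - a ≥ 0` with the extremality of `u - v`.
  · refine softmax_le_softmax_of_sub_le _ _ _ fun y => ?_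
    nlinarith [mul_nonneg (sub_nonneg.2 hab) (sub_nonneg.2 (h y))]
  · refine softmax_le_softmax_of_sub_le _ _ _ fun y => ?_
    nlinarith [mul_nonneg (sub_nonneg.2 hab) (sub_nonneg.2 (h y))]
end
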